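/- Let U ⊆ ℝ² be a connected and simply connected open set with coordinates (u, v), and let θ : U → ℝ be a smooth function satisfying θ_{uv} = 0. Then there exists a front (f, ν) on U in the unit sphere S³ ⊂ ℝ⁴, i.e. smooth maps f, ν : U → ℝ⁴ with ⟨f, f⟩ = 1, ⟨ν, ν⟩ = 1, ⟨f, ν⟩ = 0, ⟨f_u, ν⟩ = ⟨f_v, ν⟩ = 0, and with X ↦ (df_q(X), dν_q(X)) injective for every q ∈ U, whose fundamental forms are: ⟨f_u, f_u⟩ = 1, ⟨f_u, f_v⟩ = cos θ, ⟨f_v, f_v⟩ = 1; ⟨f_u, ν_u⟩ = 0, ⟨f_u, ν_v⟩ = ⟨f_v, ν_u⟩ = −sin θ, ⟨f_v, ν_v⟩ = 0; ⟨ν_u, ν_u⟩ = 1, ⟨ν_u, ν_v⟩ = −cos θ, ⟨ν_v, ν_v⟩ = 1. The singular set of f is Σ = {q : θ(q) ≡ 0 (mod π)}, and at every point of U∖Σ one has (II(∂_u,∂_u)II(∂_v,∂_v) − II(∂_u,∂_v)²)/(I(∂_u,∂_u)I(∂_v,∂_v) − I(∂_u,∂_v)²) = −1, i.e. by the Gauss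 equation in S³ the Gaussian curvature of the induced metric is identically 0 (f is a flat front in S³). -/

import Mathlib

open scoped Matrix

noncomputable section

/-- Partial derivative of a vector-valued map in the `k`-th coordinate direction. -/
def pd {m N : ℕ} (k : Fin m) (f : (Fin m → ℝ) → (Fin N → ℝ)) :
    (Fin m → ℝ) → (Fin N → ℝ) :=
  fun q => fderiv ℝ f q (Pi.single k 1)

/-- Partial derivative of a scalar function in the `k`-th coordinate direction. -/
def pdr {m : ℕ} (k : Fin m) (g : (Fin m → ℝ) → ℝ) : (Fin m → ℝ) → ℝ :=
  fun q => fderiv ℝ g q (Pi.single k 1)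

/-!
Identify `ℝ⁴` with the quaternions. Since `θ_uv = 0`, locally `θ_u` depends on `u` alone and `θ_v`
on `v` alone, so `da = a (i + (θ_u / 2) k) du` and `dc = c (i + (θ_v / 2) k) dv` are linear ordinary
differential equations, and they have local solutions in the unit quaternions. Two local solutions
differ by a locally constant left factor. These factors form a cocycle, which splits because `U` is
simply connected, and so the local solutions glue. For global solutions `a` and `c` the front is
`f = a (sin (θ / 2) i + cos (θ / 2) j) c⁻¹`. Its normal is given by the same formula with `θ + π`
in place of `θ`. All the fundamental forms are therefore inner products within the family of
parallel fronts `F_t`, obtained from `θ + t`. In these products `a` and `c` cancel, because left and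
right multiplication by unit quaternions are isometries.
-/

open Set Filter
open scoped Topology

section Cocycle

variable {X ι G : Type*} [TopologicalSpace X] [Group G] {V : ι → Set X} {g : ι → ι → X → G}

/-- The principal bundle with discrete fibre `G` glued from the trivial bundles over the members
`V i` of an open cover along a locally constant cocycle `g`. The structure group acts by right
multiplication, so that the coordinate in `V i` of a section `σ` satisfies `σ i * g i j = σ j`. -/
def cocycleBundle [TopologicalSpace G] [DiscreteTopology G]
    (hV : ∀ i, IsOpen (V i)) (hcover : ∀ x, ∃ i, x ∈ V i)
    (hconst : ∀ i j, ∀ x ∈ V i ∩ V j, ∀ᶠ y in 𝓝 x, g i j y = g i j x)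
    (hcocycle : ∀ i j k, ∀ x ∈ V i ∩ V j ∩ V k, g i j x * g j k x = g i k x) :
    FiberBundleCore ι X G where
  baseSet := V
  isOpen_baseSet := hV
  indexAt x := (hcover x).choose
  mem_baseSet_at x := (hcover x).choose_spec
  coordChange i j x v := v * g i j x
  coordChange_self i x hx v := by
    simp [mul_eq_left.1 (hcocycle i i i x (by simpa using hx))]
  continuousOn_coordChange i j := by
    rintro ⟨x, v⟩ ⟨hx, -⟩
    have hg : ContinuousAt (g i j) x :=
      continuousAt_const.congr ((hconst i j x hx).mono fun _ h => h.symm)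
    exact (continuousAt_snd.mul (hg.comp continuousAt_fst)).continuousWithinAt
  coordChange_comp i j k x hx v := by rw [mul_assoc, hcocycle i j k x hx]

theorem exists_locallyConstant_splitting [SimplyConnectedSpace X] [LocallyPathConnectedSpace X]
    (hV : ∀ i, IsOpen (V i)) (hcover : ∀ x, ∃ i, x ∈ V i)
    (hconst : ∀ i j, ∀ x ∈ V i ∩ V j, ∀ᶠ y in 𝓝 x, g i j y = g i j x)
    (hcocycle : ∀ i j k, ∀ x ∈ V i ∩ V j ∩ V k, g i j x * g j k x = g i k x) :
    ∃ s : ι → X → G, (∀ i, ∀ x ∈ V i, ∀ᶠ y in 𝓝 x, s i y = s i x) ∧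
      ∀ i j, ∀ x ∈ V i ∩ V j, s i x * g i j x = s j x := by
  let _ : TopologicalSpace G := ⊥
  have _ : DiscreteTopology G := ⟨rfl⟩
  let Z := cocycleBundle hV hcover hconst hcocycle
  have hcovering : IsCoveringMap Z.proj :=
    IsCoveringMap.mk Z.proj (fun _ => G) (fun x => Z.localTriv (Z.indexAt x)) Z.mem_baseSet_at
  obtain ⟨x₀⟩ : Nonempty X := inferInstance
  obtain ⟨σ, ⟨-, hσ⟩, -⟩ := hcovering.existsUnique_continuousMap_lifts (ContinuousMap.id X) x₀
    (⟨x₀, (1 : G)⟩ : Z.TotalSpace) rfl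
  have hσ_base (x : X) : (σ x).proj = x := congrFun hσ x
  refine ⟨fun i x => (Z.localTriv i (σ x)).2, fun i x hx => ?_, fun i j x hx => ?_⟩
  · have hmem : σ x ∈ (Z.localTriv i).source := by
      rwa [FiberBundleCore.mem_localTriv_source, hσ_base]
    have hcont : ContinuousAt (fun y => (Z.localTriv i (σ y)).2) x :=
      continuousAt_snd.comp (((Z.localTriv i).continuousAt hmem).comp σ.continuous.continuousAt)
    rw [ContinuousAt, nhds_discrete G] at hcont
    exact tendsto_pure.1 hcont
  · simp only [FiberBundleCore.localTriv_apply, hσ_base]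
    exact Z.coordChange_comp (Z.indexAt x) i j x ⟨⟨Z.mem_baseSet_at x, hx.1⟩, hx.2⟩ (σ x).2

end Cocycle

section LinearODE

variable {E : Type*} [NormedAddCommGroup E] [NormedSpace ℝ E]

theorem exists_eq_and_eventually_hasDerivAt_clm_apply [CompleteSpace E] {A : ℝ → E →L[ℝ] E}
    {t₀ : ℝ} (hA : ∀ᶠ t in 𝓝 t₀, ContinuousAt A t) (x₀ : E) :
    ∃ y : ℝ → E, y t₀ = x₀ ∧ ∀ᶠ t in 𝓝 t₀, HasDerivAt y (A t (y t)) t := by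
  set M := ‖A t₀‖₊ + 1
  set L := M * (‖x₀‖₊ + 1)
  have hbound : ∀ᶠ t in 𝓝 t₀, ‖A t‖₊ ≤ M :=
    hA.self_of_nhds.nnnorm.eventually_le_const (lt_add_one _)
  obtain ⟨δ, hδ, hball⟩ := Metric.eventually_nhds_iff_ball.1 (hA.and hbound)
  have hL : 0 < (L : ℝ) := by positivity
  set ε : ℝ := min (δ / 2) (L : ℝ)⁻¹
  have hε : 0 < ε := by positivity
  have hsub : Icc (t₀ - ε) (t₀ + ε) ⊆ Metric.ball t₀ δ := by
    rw [← Real.closedBall_eq_Icc]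
    exact Metric.closedBall_subset_ball ((min_le_left _ _).trans_lt (half_lt_self hδ))
  have hPL : IsPicardLindelof (fun t x => A t x)
      (⟨t₀, by constructor <;> linarith⟩ : Icc (t₀ - ε) (t₀ + ε)) x₀ 1 0 L M :=
    { lipschitzOnWith := fun t ht =>
        ((A t).lipschitz.weaken (hball t (hsub ht)).2).lipschitzOnWith
      continuousOn := fun x _ t ht =>
        ((hball t (hsub ht)).1.clm_apply continuousAt_const).continuousWithinAt
      norm_le := fun t ht x hx =>
        (A t).le_of_opNorm_le_of_le (hball t (hsub ht)).2 (norm_le_of_mem_closedBall hx)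
      mul_max_le := by
        have hLε : (L : ℝ) * ε ≤ 1 :=
          (mul_le_mul_of_nonneg_left (min_le_right _ _) hL.le).trans_eq (mul_inv_cancel₀ hL.ne')
        simpa using hLε }
  obtain ⟨y, hy₀, hy⟩ := hPL.exists_eq_forall_mem_Icc_hasDerivWithinAt₀
  refine ⟨y, hy₀, ?_⟩
  filter_upwards [Ioo_mem_nhds (sub_lt_self t₀ hε) (lt_add_of_pos_right t₀ hε)] with t ht
  exact (hy t (Ioo_subset_Icc_self ht)).hasDerivAt (Icc_mem_nhds ht.1 ht.2)

end LinearODE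

section ConstancyFromDerivative

variable {E F : Type*} [NormedAddCommGroup E] [NormedSpace ℝ E] [NormedAddCommGroup F]
  [NormedSpace ℝ F]

theorem eventually_eq_of_eventually_hasFDerivAt_zero {f : E → F} {x : E}
    (hf : ∀ᶠ y in 𝓝 x, HasFDerivAt f (0 : E →L[ℝ] F) y) : ∀ᶠ y in 𝓝 x, f y = f x := by
  obtain ⟨ε, hε, hball⟩ := Metric.eventually_nhds_iff_ball.1 hf
  filter_upwards [Metric.ball_mem_nhds x hε] with y hy
  exact Metric.isOpen_ball.is_const_of_fderiv_eq_zero (convex_ball x ε).isPreconnected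
    (fun z hz => (hball z hz).differentiableAt.differentiableWithinAt)
    (fun z hz => (hball z hz).fderiv) hy (Metric.mem_ball_self hε)

theorem eq_of_hasFDerivAt_apply_sub_eq_zero {f : E → F} {f' : E → E →L[ℝ] F} {s : Set E}
    (hs : Convex ℝ s) (hf : ∀ z ∈ s, HasFDerivAt f (f' z) z) {x y : E} (hx : x ∈ s) (hy : y ∈ s)
    (hzero : ∀ z ∈ s, f' z (y - x) = 0) : f y = f x := by
  have hderiv (t : ℝ) (ht : t ∈ Icc (0 : ℝ) 1) :
      HasDerivAt (fun τ => f (AffineMap.lineMap x y τ)) 0 t := by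
    have hmem := hs.lineMap_mem hx hy ht
    simpa only [Function.comp_def, hzero _ hmem] using
      (hf _ hmem).comp_hasDerivAt t AffineMap.hasDerivAt_lineMap
  simpa using constant_of_has_deriv_right_zero
    (fun t ht => (hderiv t ht).continuousAt.continuousWithinAt)
    (fun t ht => (hderiv t (Ico_subset_Icc_self ht)).hasDerivWithinAt) 1
    (right_mem_Icc.2 zero_le_one)

end ConstancyFromDerivative

section UnitaryFrames

variable {E 𝔸 : Type*} [NormedAddCommGroup E] [NormedSpace ℝ E] [NormedRing 𝔸] [NormedAlgebra ℝ 𝔸]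
  [StarRing 𝔸]

/-- A unitary frame of the `𝔸`-valued one-form `ω` on `s`: a unitary-valued map `a` with
`da = a ω` at every point of `s`. -/
def IsUnitaryFrameOn (ω : E → E →L[ℝ] 𝔸) (a : E → unitary 𝔸) (s : Set E) : Prop :=
  ∀ x ∈ s, HasFDerivAt (fun y => (a y : 𝔸)) ((a x : 𝔸) • ω x) x

namespace IsUnitaryFrameOn

variable {ω : E → E →L[ℝ] 𝔸} {a b : E → unitary 𝔸} {s t : Set E}

theorem mono (ha : IsUnitaryFrameOn ω a s) (hts : t ⊆ s) : IsUnitaryFrameOn ω a t :=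
  fun x hx => ha x (hts hx)

theorem contDiffOn (ha : IsUnitaryFrameOn ω a s) (hs : IsOpen s) {n : ℕ∞}
    (hω : ContDiffOn ℝ n ω s) : ContDiffOn ℝ n (fun x => (a x : 𝔸)) s := by
  rw [contDiffOn_iff_forall_nat_le]
  intro m hm
  induction m with
  | zero => exact contDiffOn_zero.2 fun x hx => (ha x hx).continuousAt.continuousWithinAt
  | succ m ih =>
    have hm' : (m : ℕ∞) ≤ n := le_trans (by exact_mod_cast m.le_succ) hm
    rw [Nat.cast_succ, contDiffOn_succ_iff_fderiv_of_isOpen hs]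
    refine ⟨fun x hx => (ha x hx).differentiableAt.differentiableWithinAt, by simp, ?_⟩
    exact (((ContinuousLinearMap.mul ℝ 𝔸).contDiff.comp_contDiffOn (ih hm')).clm_comp
      (hω.of_le (by exact_mod_cast hm'))).congr fun x hx => (ha x hx).fderiv

variable [ContinuousStar 𝔸] [StarModule ℝ 𝔸]

theorem apply_add_star_apply (ha : IsUnitaryFrameOn ω a s) {x : E} (hx : x ∈ s) (v : E) :
    ω x v + star (ω x v) = 0 := by
  have hconst : HasFDerivAt (fun y => (a y : 𝔸) * star (a y : 𝔸)) (0 : E →L[ℝ] 𝔸) x := by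
    simpa using hasFDerivAt_const (𝕜 := ℝ) (1 : 𝔸) x
  have h := DFunLike.congr_fun (((ha x hx).mul' (ha x hx).star).unique hconst) v
  have h' : (a x : 𝔸) * (ω x v + star (ω x v)) * star (a x : 𝔸) = 0 := by
    simpa [mul_add, add_mul, mul_assoc, add_comm] using h
  exact (Unitary.isUnit_coe (U := a x)).mul_right_eq_zero.1
    ((Unitary.isUnit_coe (U := a x)).star.mul_left_eq_zero.1 h')

theorem eventually_mul_inv_eq (ha : IsUnitaryFrameOn ω a s) (hb : IsUnitaryFrameOn ω b s) {x : E}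
    (hs : s ∈ 𝓝 x) : ∀ᶠ y in 𝓝 x, a y * (b y)⁻¹ = a x * (b x)⁻¹ := by
  have hderiv : ∀ᶠ y in 𝓝 x,
      HasFDerivAt (fun y => (a y : 𝔸) * star (b y : 𝔸)) (0 : E →L[ℝ] 𝔸) y := by
    filter_upwards [hs] with y hy
    refine ((ha y hy).mul' (hb y hy).star).congr_fderiv ?_
    ext v
    have h : (a y : 𝔸) * (ω y v + star (ω y v)) * star (b y : 𝔸) = 0 := by
      rw [ha.apply_add_star_apply hy, mul_zero, zero_mul]
    simpa [mul_add, add_mul, mul_assoc, add_comm] using h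
  filter_upwards [eventually_eq_of_eventually_hasFDerivAt_zero hderiv] with y hy
  exact Subtype.ext hy

end IsUnitaryFrameOn

theorem exists_isUnitaryFrameOn_of_locally [ContinuousStar 𝔸] [StarModule ℝ 𝔸]
    {ω : E → E →L[ℝ] 𝔸} {U : Set E} (hU : IsOpen U) [SimplyConnectedSpace U]
    (hlocal : ∀ p ∈ U, ∃ V ∈ 𝓝 p, ∃ a, IsUnitaryFrameOn ω a V) :
    ∃ a, IsUnitaryFrameOn ω a U := by
  have hlocal_open (p : U) : ∃ V : Set E, IsOpen V ∧ (p : E) ∈ V ∧ ∃ a, IsUnitaryFrameOn ω a V := by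
    obtain ⟨W, hW, a, ha⟩ := hlocal p p.2
    obtain ⟨V, hVW, hV, hpV⟩ := mem_nhds_iff.1 hW
    exact ⟨V, hV, hpV, a, ha.mono hVW⟩
  choose V hV hmem a ha using hlocal_open
  have _ := hU.locallyPathConnectedSpace
  obtain ⟨s, hs_const, hs_glue⟩ := exists_locallyConstant_splitting
    (V := fun p : U => ((↑) : U → E) ⁻¹' V p) (g := fun p q x => a p x * (a q x)⁻¹)
    (fun p => (hV p).preimage continuous_subtype_val) (fun x => ⟨x, hmem x⟩)
    (fun p q x hx => continuous_subtype_val.continuousAt.eventually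
      (((ha p).mono inter_subset_left).eventually_mul_inv_eq ((ha q).mono inter_subset_right)
        (((hV p).inter (hV q)).mem_nhds hx)))
    (fun p q r x _ => by group)
  refine ⟨Function.extend (↑) (fun x : U => s x x * a x x) (1 : E → unitary 𝔸), fun x hx => ?_⟩
  lift x to U using hx
  rw [Subtype.val_injective.extend_apply]
  have hglobal : ∀ᶠ y in 𝓝 (x : E),
      Function.extend (↑) (fun x : U => s x x * a x x) (1 : E → unitary 𝔸) y = s x x * a x y := by
    rw [← hU.isOpenEmbedding_subtypeVal.map_nhds_eq, eventually_map]
    filter_upwards [hs_const x x (hmem x),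
      continuous_subtype_val.continuousAt ((hV x).mem_nhds (hmem x))] with y hy hyV
    rw [Subtype.val_injective.extend_apply, ← hy, ← hs_glue x y y ⟨hyV, hmem y⟩]
    group
  refine HasFDerivAt.congr_of_eventuallyEq ?_ (hglobal.mono fun y hy => congrArg Subtype.val hy)
  simpa [mul_smul] using (ha x x (hmem x)).const_mul (s x x : 𝔸)

section Existence

variable [CompleteSpace 𝔸] [ContinuousStar 𝔸] [StarModule ℝ 𝔸]

theorem exists_unitary_eventually_hasDerivAt {g : ℝ → 𝔸} {t₀ : ℝ}
    (hcont : ∀ᶠ t in 𝓝 t₀, ContinuousAt g t) (hskew : ∀ᶠ t in 𝓝 t₀, g t ∈ skewAdjoint 𝔸) :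
    ∃ y : ℝ → unitary 𝔸, ∀ᶠ t in 𝓝 t₀, HasDerivAt (fun τ => (y τ : 𝔸)) (y t * g t) t := by
  obtain ⟨z, hz₀, hz⟩ := exists_eq_and_eventually_hasDerivAt_clm_apply
    (A := fun t => (ContinuousLinearMap.mul ℝ 𝔸).flip (g t))
    (hcont.mono fun t ht => (ContinuousLinearMap.mul ℝ 𝔸).flip.continuous.continuousAt.comp ht) 1
  have hderiv : ∀ᶠ t in 𝓝 t₀, HasFDerivAt (fun τ => z τ * star (z τ)) (0 : ℝ →L[ℝ] 𝔸) t := by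
    filter_upwards [hz, hskew] with t ht hgt
    exact (ht.mul ht.star).hasFDerivAt.congr_fderiv
      (by simp [skewAdjoint.mem_iff.1 hgt, mul_assoc])
  have hunit : ∀ᶠ t in 𝓝 t₀, IsUnit (z t) :=
    hz.self_of_nhds.continuousAt (by simpa [hz₀] using Units.nhds (1 : 𝔸ˣ))
  have hmem : ∀ᶠ t in 𝓝 t₀, ∃ u : unitary 𝔸, (u : 𝔸) = z t := by
    filter_upwards [eventually_eq_of_eventually_hasFDerivAt_zero hderiv, hunit] with t ht hut
    exact ⟨⟨z t, hut.mem_unitary_iff_mul_star_self.2 (by simpa [hz₀] using ht)⟩, rfl⟩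
  obtain ⟨y, hy⟩ := hmem.choice
  refine ⟨y, ?_⟩
  filter_upwards [hz, hy.eventually_nhds] with t ht hyt
  rw [hyt.self_of_nhds]
  exact ht.congr_of_eventuallyEq hyt

theorem exists_isUnitaryFrameOn_nhds_smulRight {ℓ : E →L[ℝ] ℝ} {h h' : E → 𝔸} {p : E}
    (hderiv : ∀ᶠ x in 𝓝 p, HasFDerivAt h (ℓ.smulRight (h' x)) x)
    (hskew : ∀ᶠ x in 𝓝 p, h x ∈ skewAdjoint 𝔸) :
    ∃ V ∈ 𝓝 p, ∃ a, IsUnitaryFrameOn (fun x => ℓ.smulRight (h x)) a V := by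
  obtain rfl | ⟨w, hw⟩ : ℓ = 0 ∨ ∃ w, ℓ w = 1 := by
    refine or_iff_not_imp_left.2 fun hℓ => ?_
    obtain ⟨w, hw⟩ := DFunLike.ne_iff.1 hℓ
    exact ⟨(ℓ w)⁻¹ • w, by simpa using inv_mul_cancel₀ hw⟩
  · exact ⟨univ, univ_mem, 1, fun x _ => by simpa using hasFDerivAt_const (1 : 𝔸) x⟩
  let slice (t : ℝ) : E := p + (t - ℓ p) • w
  have hslice : Continuous slice := by fun_prop
  have hslice₀ : slice (ℓ p) = p := by simp [slice]
  obtain ⟨ε, hε, hball⟩ := Metric.eventually_nhds_iff_ball.1 hderiv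
  have hh_slice : ∀ᶠ x in 𝓝 p, h (slice (ℓ x)) = h x := by
    filter_upwards [Metric.ball_mem_nhds p hε, (hslice.comp ℓ.continuous).continuousAt
      (by simpa [hslice₀] using Metric.ball_mem_nhds p hε)] with x hx hx'
    exact eq_of_hasFDerivAt_apply_sub_eq_zero (convex_ball p ε) hball hx hx'
      fun z _ => by simp [slice, hw]
  have htendsto : Tendsto slice (𝓝 (ℓ p)) (𝓝 p) := by
    simpa only [hslice₀] using hslice.tendsto (ℓ p)
  obtain ⟨y, hy⟩ := exists_unitary_eventually_hasDerivAt (g := h ∘ slice)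
    ((htendsto.eventually hderiv).mono fun t ht => ht.continuousAt.comp hslice.continuousAt)
    (htendsto.eventually hskew)
  refine ⟨_, (ℓ.continuous.continuousAt.eventually hy).and hh_slice, y ∘ ℓ, ?_⟩
  rintro x ⟨hyx, hhx⟩
  refine (hyx.hasFDerivAt.comp x ℓ.hasFDerivAt).congr_fderiv ?_
  ext v
  simp [← hhx]

theorem exists_isUnitaryFrameOn_smulRight {ℓ : E →L[ℝ] ℝ} {h h' : E → 𝔸} {U : Set E}
    (hU : IsOpen U) [SimplyConnectedSpace U]
    (hderiv : ∀ x ∈ U, HasFDerivAt h (ℓ.smulRight (h' x)) x)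
    (hskew : ∀ x ∈ U, h x ∈ skewAdjoint 𝔸) :
    ∃ a, IsUnitaryFrameOn (fun x => ℓ.smulRight (h x)) a U :=
  exists_isUnitaryFrameOn_of_locally hU fun _ hp => exists_isUnitaryFrameOn_nhds_smulRight
    (mem_of_superset (hU.mem_nhds hp) hderiv) (mem_of_superset (hU.mem_nhds hp) hskew)

end Existence

end UnitaryFrames

section PartialDerivatives

variable {m N : ℕ}

theorem fderiv_apply_eq_sum_smul_pd (f : (Fin m → ℝ) → Fin N → ℝ) (q X : Fin m → ℝ) :
    fderiv ℝ f q X = ∑ k, X k • pd k f q := by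
  conv_lhs => rw [pi_eq_sum_univ' X, map_sum]
  simp [pd]

theorem fderiv_apply_eq_sum_mul_pdr (g : (Fin m → ℝ) → ℝ) (q X : Fin m → ℝ) :
    fderiv ℝ g q X = ∑ k, X k * pdr k g q := by
  conv_lhs => rw [pi_eq_sum_univ' X, map_sum]
  simp [pdr]

theorem pdr_comm {g : (Fin m → ℝ) → ℝ} {q : Fin m → ℝ} (hg : ContDiffAt ℝ 2 g q) (j k : Fin m) :
    pdr j (pdr k g) q = pdr k (pdr j g) q := by
  have hdiff : DifferentiableAt ℝ (fderiv ℝ g) q :=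
    (hg.fderiv_right (m := 1) (by norm_num)).differentiableAt one_ne_zero
  have hpdr (i l : Fin m) :
      pdr i (pdr l g) q = fderiv ℝ (fderiv ℝ g) q (Pi.single i 1) (Pi.single l 1) := by
    change fderiv ℝ (fun y => fderiv ℝ g y (Pi.single l 1)) q (Pi.single i 1) = _
    simp [fderiv_clm_apply hdiff (differentiableAt_const _)]
  rw [hpdr, hpdr, (hg.isSymmSndFDerivAt (by simp)).eq]

theorem contDiffOn_pdr {g : (Fin m → ℝ) → ℝ} {U : Set (Fin m → ℝ)} {n r : WithTop ℕ∞}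
    (hU : IsOpen U) (hg : ContDiffOn ℝ n g U) (hrn : r + 1 ≤ n) (k : Fin m) :
    ContDiffOn ℝ r (pdr k g) U :=
  (hg.fderiv_of_isOpen hU hrn).clm_apply contDiffOn_const

end PartialDerivatives

section AsymptoticForms

variable {N : ℕ}

theorem smul_add_smul_eq_zero_iff {p r : Fin N → ℝ} {φ : ℝ} (hp : p ⬝ᵥ p = 1) (hr : r ⬝ᵥ r = 1)
    (hpr : p ⬝ᵥ r = Real.cos φ) (x y : ℝ) :
    x • p + y • r = 0 ↔ x + Real.cos φ * y = 0 ∧ Real.sin φ * y = 0 := by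
  have hnorm : (x • p + y • r) ⬝ᵥ (x • p + y • r) =
      (x + Real.cos φ * y) ^ 2 + (Real.sin φ * y) ^ 2 := by
    simp only [add_dotProduct, dotProduct_add, smul_dotProduct, dotProduct_smul, hp, hr, hpr,
      dotProduct_comm r p, smul_eq_mul]
    linear_combination -y ^ 2 * Real.sin_sq_add_cos_sq φ
  rw [← dotProduct_self_eq_zero, hnorm, add_eq_zero_iff_of_nonneg (sq_nonneg _) (sq_nonneg _),
    sq_eq_zero_iff, sq_eq_zero_iff]

variable {f : (Fin 2 → ℝ) → Fin N → ℝ} {q : Fin 2 → ℝ} {φ : ℝ}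

theorem fderiv_apply_eq_zero_iff_of_pd_dotProduct (h₀ : pd 0 f q ⬝ᵥ pd 0 f q = 1)
    (h₁ : pd 1 f q ⬝ᵥ pd 1 f q = 1) (h₀₁ : pd 0 f q ⬝ᵥ pd 1 f q = Real.cos φ) (X : Fin 2 → ℝ) :
    fderiv ℝ f q X = 0 ↔ X 0 + Real.cos φ * X 1 = 0 ∧ Real.sin φ * X 1 = 0 := by
  rw [fderiv_apply_eq_sum_smul_pd, Fin.sum_univ_two, smul_add_smul_eq_zero_iff h₀ h₁ h₀₁]

/-- In asymptotic arc-length coordinates with angle `φ` at `q`, the fundamental forms of the pair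
`(f, ν)` are `I = du² + 2 cos φ du dv + dv²`, `II = 2 sin φ du dv` and
`III = du² - 2 cos φ du dv + dv²`. The fields `second` list `⟨df, dν⟩ = -II`. -/
structure HasAsymptoticForms (f ν : (Fin 2 → ℝ) → Fin N → ℝ) (φ : ℝ) (q : Fin 2 → ℝ) : Prop where
  first₀₀ : pd 0 f q ⬝ᵥ pd 0 f q = 1
  first₀₁ : pd 0 f q ⬝ᵥ pd 1 f q = Real.cos φ
  first₁₁ : pd 1 f q ⬝ᵥ pd 1 f q = 1
  second₀₀ : pd 0 f q ⬝ᵥ pd 0 ν q = 0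
  second₀₁ : pd 0 f q ⬝ᵥ pd 1 ν q = -Real.sin φ
  second₁₀ : pd 1 f q ⬝ᵥ pd 0 ν q = -Real.sin φ
  second₁₁ : pd 1 f q ⬝ᵥ pd 1 ν q = 0
  third₀₀ : pd 0 ν q ⬝ᵥ pd 0 ν q = 1
  third₀₁ : pd 0 ν q ⬝ᵥ pd 1 ν q = -Real.cos φ
  third₁₁ : pd 1 ν q ⬝ᵥ pd 1 ν q = 1

namespace HasAsymptoticForms

variable {ν : (Fin 2 → ℝ) → Fin N → ℝ}

theorem eq_zero_of_fderiv_apply_eq_zero (h : HasAsymptoticForms f ν φ q) {X : Fin 2 → ℝ}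
    (hf : fderiv ℝ f q X = 0) (hν : fderiv ℝ ν q X = 0) : X = 0 := by
  obtain ⟨hcos, hsin⟩ :=
    (fderiv_apply_eq_zero_iff_of_pd_dotProduct h.first₀₀ h.first₁₁ h.first₀₁ X).1 hf
  obtain ⟨hcos', -⟩ := (fderiv_apply_eq_zero_iff_of_pd_dotProduct h.third₀₀ h.third₁₁
    (h.third₀₁.trans (Real.cos_add_pi φ).symm) X).1 hν
  rw [Real.cos_add_pi] at hcos'
  have hX₀ : X 0 = 0 := by linear_combination (hcos + hcos') / 2
  have hX₁ : X 1 = 0 := by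
    linear_combination Real.cos φ * (hcos - hcos') / 2 + Real.sin φ * hsin
      - X 1 * Real.sin_sq_add_cos_sq φ
  exact funext (Fin.forall_fin_two.2 ⟨hX₀, hX₁⟩)

theorem exists_ne_zero_fderiv_apply_eq_zero_iff (h : HasAsymptoticForms f ν φ q) :
    (∃ X : Fin 2 → ℝ, X ≠ 0 ∧ fderiv ℝ f q X = 0) ↔ ∃ n : ℤ, φ = n * Real.pi := by
  simp only [fderiv_apply_eq_zero_iff_of_pd_dotProduct h.first₀₀ h.first₁₁ h.first₀₁,
    eq_comm (a := φ), ← Real.sin_eq_zero_iff]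
  constructor
  · rintro ⟨X, hX, hcos, hsin⟩
    refine (mul_eq_zero.1 hsin).resolve_right fun hX₁ => hX ?_
    ext k
    fin_cases k <;> simp_all
  · intro hφ
    exact ⟨![-Real.cos φ, 1], fun h => one_ne_zero (congrFun h 1), by simp [hφ]⟩

theorem det_second_div_det_first (h : HasAsymptoticForms f ν φ q)
    (hφ : ∀ n : ℤ, φ ≠ n * Real.pi) :
    ((-(pd 0 f q ⬝ᵥ pd 0 ν q)) * (-(pd 1 f q ⬝ᵥ pd 1 ν q)) - (-(pd 0 f q ⬝ᵥ pd 1 ν q)) ^ 2) /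
      ((pd 0 f q ⬝ᵥ pd 0 f q) * (pd 1 f q ⬝ᵥ pd 1 f q) - (pd 0 f q ⬝ᵥ pd 1 f q) ^ 2) = -1 := by
  have hsin : Real.sin φ ≠ 0 := Real.sin_ne_zero_iff.2 fun n => (hφ n).symm
  rw [h.first₀₀, h.first₀₁, h.first₁₁, h.second₀₀, h.second₀₁, h.second₁₁, one_mul, ← Real.sin_sq]
  field_simp
  ring

end HasAsymptoticForms

end AsymptoticForms

section FlatFronts

open scoped Quaternion InnerProductSpace

/-- The identification of the quaternions with `ℝ⁴` through the coordinates `1, i, j, k`. -/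
def quaternionEquivFin : ℍ[ℝ] ≃L[ℝ] (Fin 4 → ℝ) :=
  Quaternion.linearIsometryEquivTuple.toContinuousLinearEquiv.trans (EuclideanSpace.equiv (Fin 4) ℝ)

instance : StarModule ℝ ℍ[ℝ] := ⟨Quaternion.star_smul⟩

/-- The quaternion `w + x i + y j + z k`. The type of the constructor `⟨w, x, y, z⟩` is a
`QuaternionAlgebra` on which the `simp` lemmas of `Quaternion` do not fire. -/
def quaternionOfCoords (w x y z : ℝ) : ℍ[ℝ] := ⟨w, x, y, z⟩

section Coordinates

variable (w x y z : ℝ)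

@[simp] theorem quaternionOfCoords_re : (quaternionOfCoords w x y z).re = w := rfl

@[simp] theorem quaternionOfCoords_imI : (quaternionOfCoords w x y z).imI = x := rfl

@[simp] theorem quaternionOfCoords_imJ : (quaternionOfCoords w x y z).imJ = y := rfl

@[simp] theorem quaternionOfCoords_imK : (quaternionOfCoords w x y z).imK = z := rfl

end Coordinates

theorem inner_quaternion_eq_sum (x y : ℍ[ℝ]) :
    ⟪x, y⟫_ℝ = x.re * y.re + x.imI * y.imI + x.imJ * y.imJ + x.imK * y.imK := by
  simp [Quaternion.inner_def]

theorem quaternionEquivFin_dotProduct (x y : ℍ[ℝ]) :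
    quaternionEquivFin x ⬝ᵥ quaternionEquivFin y = ⟪x, y⟫_ℝ := by
  simp [inner_quaternion_eq_sum, quaternionEquivFin, dotProduct, Fin.sum_univ_four]

theorem inner_unitary_mul_mul_star (a b : unitary ℍ[ℝ]) (x y : ℍ[ℝ]) :
    ⟪(a : ℍ[ℝ]) * x * star (b : ℍ[ℝ]), (a : ℍ[ℝ]) * y * star (b : ℍ[ℝ])⟫_ℝ = ⟪x, y⟫_ℝ := by
  have hconj : (a : ℍ[ℝ]) * x * star (b : ℍ[ℝ]) * star ((a : ℍ[ℝ]) * y * star (b : ℍ[ℝ])) =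
      a * (x * star y) * star (a : ℍ[ℝ]) := by
    simp only [star_mul, star_star, mul_assoc]
    rw [← mul_assoc (star (b : ℍ[ℝ])), Unitary.star_mul_self_of_mem b.2, one_mul]
  have re_mul_comm (z w : ℍ[ℝ]) : (z * w).re = (w * z).re := by
    simp only [Quaternion.re_mul]
    ring
  rw [Quaternion.inner_def, hconj, re_mul_comm, ← mul_assoc, Unitary.star_mul_self_of_mem a.2,
    one_mul, Quaternion.inner_def]

/-- The unit quaternion `sin (φ / 2) i + cos (φ / 2) j`. -/
def horizontalUnit (φ : ℝ) : ℍ[ℝ] := quaternionOfCoords 0 (Real.sin (φ / 2)) (Real.cos (φ / 2)) 0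

/-- The unit quaternion `sin (φ / 2) + cos (φ / 2) k`. -/
def verticalUnit (φ : ℝ) : ℍ[ℝ] := quaternionOfCoords (Real.sin (φ / 2)) 0 0 (Real.cos (φ / 2))

theorem inner_horizontalUnit (φ ψ : ℝ) :
    ⟪horizontalUnit φ, horizontalUnit ψ⟫_ℝ = Real.cos ((φ - ψ) / 2) := by
  rw [inner_quaternion_eq_sum, sub_div, Real.cos_sub]
  simp [horizontalUnit, add_comm]

theorem inner_verticalUnit (φ ψ : ℝ) :
    ⟪verticalUnit φ, verticalUnit ψ⟫_ℝ = Real.cos ((φ - ψ) / 2) := by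
  rw [inner_quaternion_eq_sum, sub_div, Real.cos_sub]
  simp [verticalUnit, add_comm]

theorem inner_verticalUnit_horizontalUnit (φ ψ : ℝ) :
    ⟪verticalUnit φ, horizontalUnit ψ⟫_ℝ = 0 := by
  rw [inner_quaternion_eq_sum]
  simp [verticalUnit, horizontalUnit]

theorem horizontalUnit_eq_smul_add_smul (φ : ℝ) :
    horizontalUnit φ = Real.sin (φ / 2) • quaternionOfCoords 0 1 0 0
      + Real.cos (φ / 2) • quaternionOfCoords 0 0 1 0 := by
  ext <;> simp [horizontalUnit]

theorem contDiff_horizontalUnit {n : WithTop ℕ∞} : ContDiff ℝ n horizontalUnit := by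
  rw [funext horizontalUnit_eq_smul_add_smul]
  fun_prop

theorem hasDerivAt_horizontalUnit (φ : ℝ) :
    HasDerivAt horizontalUnit
      (quaternionOfCoords 0 (Real.cos (φ / 2) / 2) (-Real.sin (φ / 2) / 2) 0) φ := by
  have hhalf : HasDerivAt (fun x : ℝ => x / 2) (1 / 2) φ := (hasDerivAt_id φ).div_const 2
  rw [funext horizontalUnit_eq_smul_add_smul]
  refine ((hhalf.sin.smul_const (quaternionOfCoords 0 1 0 0)).add
    (hhalf.cos.smul_const (quaternionOfCoords 0 0 1 0))).congr_deriv ?_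
  ext <;> simp <;> ring

/-- The pure quaternion `i + (r / 2) k`. -/
def asymptoticCoeff (r : ℝ) : ℍ[ℝ] := quaternionOfCoords 0 1 0 (r / 2)

theorem asymptoticCoeff_eq_add_smul (r : ℝ) :
    asymptoticCoeff r = quaternionOfCoords 0 1 0 0 + r • quaternionOfCoords 0 0 0 (1 / 2) := by
  ext <;> simp [asymptoticCoeff, div_eq_mul_inv]

theorem asymptoticCoeff_mem_skewAdjoint (r : ℝ) : asymptoticCoeff r ∈ skewAdjoint ℍ[ℝ] := by
  rw [skewAdjoint.mem_iff]
  ext <;> simp [asymptoticCoeff]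

theorem asymptoticCoeff_structure_identity (φ α β x y : ℝ) :
    x • (asymptoticCoeff α * horizontalUnit φ)
        + (x * α + y * β) • quaternionOfCoords 0 (Real.cos (φ / 2) / 2) (-Real.sin (φ / 2) / 2) 0
        + y • (horizontalUnit φ * star (asymptoticCoeff β)) =
      x • verticalUnit (-φ) + y • verticalUnit φ := by
  ext <;> simp [asymptoticCoeff, horizontalUnit, verticalUnit, neg_div] <;> ring

/-- The `ℍ[ℝ]`-valued one-form `(i + (∂ₖθ / 2) k) duₖ`. -/
def asymptoticForm {m : ℕ} (θ : (Fin m → ℝ) → ℝ) (k : Fin m) (q : Fin m → ℝ) :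
    (Fin m → ℝ) →L[ℝ] ℍ[ℝ] :=
  (ContinuousLinearMap.proj k).smulRight (asymptoticCoeff (pdr k θ q))

section AsymptoticFrames

variable {m : ℕ} {θ : (Fin m → ℝ) → ℝ} {k : Fin m} {U : Set (Fin m → ℝ)}

theorem contDiffOn_asymptoticForm (hU : IsOpen U) (hθ : ContDiffOn ℝ (⊤ : ℕ∞) θ U) :
    ContDiffOn ℝ (⊤ : ℕ∞) (asymptoticForm θ k) U := by
  change ContDiffOn ℝ (⊤ : ℕ∞) (fun q => asymptoticForm θ k q) U
  simp only [asymptoticForm, asymptoticCoeff_eq_add_smul]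
  exact contDiffOn_const.smulRight
    (contDiffOn_const.add ((contDiffOn_pdr hU hθ (by simp) k).smul contDiffOn_const))

theorem exists_isUnitaryFrameOn_asymptoticForm (hU : IsOpen U) [SimplyConnectedSpace U]
    (hθ : ContDiffOn ℝ (⊤ : ℕ∞) θ U) (hmixed : ∀ q ∈ U, ∀ j ≠ k, pdr j (pdr k θ) q = 0) :
    ∃ a, IsUnitaryFrameOn (asymptoticForm θ k) a U := by
  have hfderiv (q : Fin m → ℝ) (hq : q ∈ U) : HasFDerivAt (pdr k θ)
      ((ContinuousLinearMap.proj k : (Fin m → ℝ) →L[ℝ] ℝ).smulRight (pdr k (pdr k θ) q)) q := by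
    have hpdr : DifferentiableAt ℝ (pdr k θ) q :=
      ((contDiffOn_pdr (r := (⊤ : ℕ∞)) hU hθ (by simp) k).contDiffAt
        (hU.mem_nhds hq)).differentiableAt (by simp)
    refine hpdr.hasFDerivAt.congr_fderiv (ContinuousLinearMap.ext fun v => ?_)
    rw [fderiv_apply_eq_sum_mul_pdr,
      Fintype.sum_eq_single k fun j hj => by rw [hmixed q hq j hj, mul_zero]]
    rfl
  refine exists_isUnitaryFrameOn_smulRight (h := fun q => asymptoticCoeff (pdr k θ q))
    (h' := fun q => pdr k (pdr k θ) q • quaternionOfCoords 0 0 0 (1 / 2)) hU (fun q hq => ?_)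
    fun q _ => asymptoticCoeff_mem_skewAdjoint _
  simp only [asymptoticCoeff_eq_add_smul]
  refine (((hfderiv q hq).smul_const _).const_add _).congr_fderiv ?_
  ext1 v
  simp [mul_smul]

end AsymptoticFrames

/-- The member at distance `t / 2` of the family of parallel flat fronts with asymptotic angle `θ`
and frames `a` and `c`. The front itself is the member `t = 0` and its unit normal the member
`t = π`. -/
def parallelFront (θ : (Fin 2 → ℝ) → ℝ) (a c : (Fin 2 → ℝ) → unitary ℍ[ℝ]) (t : ℝ)
    (q : Fin 2 → ℝ) : Fin 4 → ℝ :=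
  quaternionEquivFin (a q * horizontalUnit (θ q + t) * star (c q : ℍ[ℝ]))

section ParallelFronts

variable {θ : (Fin 2 → ℝ) → ℝ} {a c : (Fin 2 → ℝ) → unitary ℍ[ℝ]} {U : Set (Fin 2 → ℝ)}
  {q : Fin 2 → ℝ}

theorem hasFDerivAt_parallelFront (hθ : DifferentiableAt ℝ θ q)
    (ha : IsUnitaryFrameOn (asymptoticForm θ 0) a U)
    (hc : IsUnitaryFrameOn (asymptoticForm θ 1) c U) (hq : q ∈ U) (t : ℝ) :
    HasFDerivAt (parallelFront θ a c t)
      ((ContinuousLinearMap.proj 0 : (Fin 2 → ℝ) →L[ℝ] ℝ).smulRight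
        (quaternionEquivFin (a q * verticalUnit (-(θ q + t)) * star (c q : ℍ[ℝ])))
      + (ContinuousLinearMap.proj 1 : (Fin 2 → ℝ) →L[ℝ] ℝ).smulRight
        (quaternionEquivFin (a q * verticalUnit (θ q + t) * star (c q : ℍ[ℝ])))) q := by
  have hunit := (hasDerivAt_horizontalUnit (θ q + t)).hasFDerivAt.comp (f := fun x => θ x + t) q
    (hθ.hasFDerivAt.add_const t)
  refine (quaternionEquivFin.hasFDerivAt.comp q
    (((ha q hq).mul' hunit).mul' (hc q hq).star)).congr_fderiv ?_
  ext1 X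
  calc
    _ = quaternionEquivFin (a q *
          (X 0 • (asymptoticCoeff (pdr 0 θ q) * horizontalUnit (θ q + t))
            + fderiv ℝ θ q X • quaternionOfCoords 0 (Real.cos ((θ q + t) / 2) / 2)
              (-Real.sin ((θ q + t) / 2) / 2) 0
            + X 1 • (horizontalUnit (θ q + t) * star (asymptoticCoeff (pdr 1 θ q))))
          * star (c q : ℍ[ℝ])) := by
      simp only [asymptoticForm, Pi.mul_apply, Function.comp_apply, MulOpposite.op_star, smul_add,
        ContinuousLinearMap.comp_add, add_apply, ContinuousLinearMap.comp_apply, smul_apply,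
        ContinuousLinearMap.smulRight_apply, ContinuousLinearMap.proj_apply, smul_eq_mul,
        mul_smul_comm, smul_mul_assoc, map_smul, map_add, ContinuousLinearEquiv.coe_coe,
        starL'_apply, star_mul, mul_assoc, ContinuousLinearMap.toSpanSingleton_apply,
        MulOpposite.smul_eq_mul_unop, MulOpposite.unop_star, MulOpposite.unop_op, mul_add, add_mul]
      abel
    _ = quaternionEquivFin (a q * (X 0 • verticalUnit (-(θ q + t)) + X 1 • verticalUnit (θ q + t))
          * star (c q : ℍ[ℝ])) := by
      rw [fderiv_apply_eq_sum_mul_pdr, Fin.sum_univ_two, asymptoticCoeff_structure_identity]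
    _ = _ := by simp [mul_add, add_mul]

theorem contDiffOn_parallelFront (hU : IsOpen U) (hθ : ContDiffOn ℝ (⊤ : ℕ∞) θ U)
    (ha : IsUnitaryFrameOn (asymptoticForm θ 0) a U)
    (hc : IsUnitaryFrameOn (asymptoticForm θ 1) c U) (t : ℝ) :
    ContDiffOn ℝ (⊤ : ℕ∞) (parallelFront θ a c t) U := by
  have ha' := ha.contDiffOn hU (contDiffOn_asymptoticForm hU hθ)
  have hc' := hc.contDiffOn hU (contDiffOn_asymptoticForm hU hθ)
  have hunit := contDiff_horizontalUnit.comp_contDiffOn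
    (hθ.add (contDiffOn_const (c := t)))
  exact quaternionEquivFin.contDiff.comp_contDiffOn
    ((ha'.mul hunit).mul ((starL' ℝ : ℍ[ℝ] ≃L[ℝ] ℍ[ℝ]).contDiff.comp_contDiffOn hc'))

theorem parallelFront_dotProduct (s t : ℝ) :
    parallelFront θ a c s q ⬝ᵥ parallelFront θ a c t q = Real.cos ((s - t) / 2) := by
  rw [parallelFront, parallelFront, quaternionEquivFin_dotProduct, inner_unitary_mul_mul_star,
    inner_horizontalUnit, add_sub_add_left_eq_sub]

section FundamentalForms

variable (hθ : DifferentiableAt ℝ θ q) (ha : IsUnitaryFrameOn (asymptoticForm θ 0) a U)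
  (hc : IsUnitaryFrameOn (asymptoticForm θ 1) c U) (hq : q ∈ U)

include hθ ha hc hq

theorem pd_zero_parallelFront (t : ℝ) : pd 0 (parallelFront θ a c t) q =
    quaternionEquivFin (a q * verticalUnit (-(θ q + t)) * star (c q : ℍ[ℝ])) := by
  rw [pd, (hasFDerivAt_parallelFront hθ ha hc hq t).fderiv]
  simp

theorem pd_one_parallelFront (t : ℝ) : pd 1 (parallelFront θ a c t) q =
    quaternionEquivFin (a q * verticalUnit (θ q + t) * star (c q : ℍ[ℝ])) := by
  rw [pd, (hasFDerivAt_parallelFront hθ ha hc hq t).fderiv]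
  simp

theorem pd_parallelFront_dotProduct_parallelFront (k : Fin 2) (s t : ℝ) :
    pd k (parallelFront θ a c s) q ⬝ᵥ parallelFront θ a c t q = 0 := by
  fin_cases k <;>
  simp [pd_zero_parallelFront hθ ha hc hq, pd_one_parallelFront hθ ha hc hq, parallelFront,
    quaternionEquivFin_dotProduct, inner_unitary_mul_mul_star, inner_verticalUnit_horizontalUnit]

theorem pd_parallelFront_dotProduct_self (k : Fin 2) (s t : ℝ) :
    pd k (parallelFront θ a c s) q ⬝ᵥ pd k (parallelFront θ a c t) q = Real.cos ((s - t) / 2) := by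
  fin_cases k
  · simp only [Fin.zero_eta, pd_zero_parallelFront hθ ha hc hq, quaternionEquivFin_dotProduct,
      inner_unitary_mul_mul_star, inner_verticalUnit]
    rw [← Real.cos_neg]
    ring_nf
  · simp only [Fin.mk_one, pd_one_parallelFront hθ ha hc hq, quaternionEquivFin_dotProduct,
      inner_unitary_mul_mul_star, inner_verticalUnit, add_sub_add_left_eq_sub]

theorem pd_zero_parallelFront_dotProduct_pd_one (s t : ℝ) :
    pd 0 (parallelFront θ a c s) q ⬝ᵥ pd 1 (parallelFront θ a c t) q =
      Real.cos (θ q + (s + t) / 2) := by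
  rw [pd_zero_parallelFront hθ ha hc hq, pd_one_parallelFront hθ ha hc hq,
    quaternionEquivFin_dotProduct, inner_unitary_mul_mul_star, inner_verticalUnit, ← Real.cos_neg]
  ring_nf

theorem hasAsymptoticForms_parallelFront :
    HasAsymptoticForms (parallelFront θ a c 0) (parallelFront θ a c Real.pi) (θ q) q := by
  have hcross := pd_zero_parallelFront_dotProduct_pd_one hθ ha hc hq
  have hself := pd_parallelFront_dotProduct_self hθ ha hc hq
  constructor <;>
  simp [hcross, hself, dotProduct_comm (pd 1 _ q) (pd 0 _ q), neg_div, Real.cos_add_pi_div_two]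

end FundamentalForms

end ParallelFronts

end FlatFronts

/-- Realization of flat fronts in `S³ ⊂ ℝ⁴` from solutions of `θ_{uv} = 0`:
there is a front `(f, ν)` in the unit sphere with
`I = du² + 2 cos θ du dv + dv²`, `II = 2 sin θ du dv`, `III = du² − 2 cos θ du dv + dv²`;
its singular set is `{θ ≡ 0 (mod π)}` and its extrinsic curvature is `−1` at regular
points, i.e. the Gaussian curvature of the induced metric is identically `0`. -/
theorem flat_front_sphere_realization (U : Set (Fin 2 → ℝ)) (hU : IsOpen U)
    (hconn : IsConnected U) (hsc : SimplyConnectedSpace U)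
    (θ : (Fin 2 → ℝ) → ℝ) (hθ : ContDiffOn ℝ (⊤ : ℕ∞) θ U)
    (hlinear : ∀ q ∈ U, pdr 0 (pdr 1 θ) q = 0) :
    ∃ f ν : (Fin 2 → ℝ) → (Fin 4 → ℝ),
      ContDiffOn ℝ (⊤ : ℕ∞) f U ∧ ContDiffOn ℝ (⊤ : ℕ∞) ν U ∧
      (∀ q ∈ U, f q ⬝ᵥ f q = 1) ∧
      (∀ q ∈ U, ν q ⬝ᵥ ν q = 1) ∧
      (∀ q ∈ U, f q ⬝ᵥ ν q = 0) ∧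
      (∀ q ∈ U, ∀ k : Fin 2, pd k f q ⬝ᵥ ν q = 0) ∧
      (∀ q ∈ U, ∀ X : Fin 2 → ℝ, fderiv ℝ f q X = 0 → fderiv ℝ ν q X = 0 → X = 0) ∧
      (∀ q ∈ U,
        pd 0 f q ⬝ᵥ pd 0 f q = 1 ∧
        pd 0 f q ⬝ᵥ pd 1 f q = Real.cos (θ q) ∧
        pd 1 f q ⬝ᵥ pd 1 f q = 1 ∧
        pd 0 f q ⬝ᵥ pd 0 ν q = 0 ∧
        pd 0 f q ⬝ᵥ pd 1 ν q = -Real.sin (θ q) ∧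
        pd 1 f q ⬝ᵥ pd 0 ν q = -Real.sin (θ q) ∧
        pd 1 f q ⬝ᵥ pd 1 ν q = 0 ∧
        pd 0 ν q ⬝ᵥ pd 0 ν q = 1 ∧
        pd 0 ν q ⬝ᵥ pd 1 ν q = -Real.cos (θ q) ∧
        pd 1 ν q ⬝ᵥ pd 1 ν q = 1) ∧
      (∀ q ∈ U,
        ((∃ X : Fin 2 → ℝ, X ≠ 0 ∧ fderiv ℝ f q X = 0) ↔ ∃ n : ℤ, θ q = n * Real.pi)) ∧
      (∀ q ∈ U, (∀ n : ℤ, θ q ≠ n * Real.pi) →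
        ((-(pd 0 f q ⬝ᵥ pd 0 ν q)) * (-(pd 1 f q ⬝ᵥ pd 1 ν q))
            - (-(pd 0 f q ⬝ᵥ pd 1 ν q)) ^ 2) /
          ((pd 0 f q ⬝ᵥ pd 0 f q) * (pd 1 f q ⬝ᵥ pd 1 f q)
            - (pd 0 f q ⬝ᵥ pd 1 f q) ^ 2) = -1) := by
  have hmixed (k : Fin 2) : ∀ q ∈ U, ∀ j ≠ k, pdr j (pdr k θ) q = 0 := by
    intro q hq j hjk
    have hθq : ContDiffAt ℝ 2 θ q := mod_cast contDiffAt_infty.1 (hθ.contDiffAt (hU.mem_nhds hq)) 2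
    fin_cases j <;> fin_cases k <;> simp_all [pdr_comm hθq 1 0]
  obtain ⟨a, ha⟩ := exists_isUnitaryFrameOn_asymptoticForm hU hθ (hmixed 0)
  obtain ⟨c, hc⟩ := exists_isUnitaryFrameOn_asymptoticForm hU hθ (hmixed 1)
  have hdiff (q : Fin 2 → ℝ) (hq : q ∈ U) : DifferentiableAt ℝ θ q :=
    (hθ.contDiffAt (hU.mem_nhds hq)).differentiableAt (by simp)
  have hforms (q : Fin 2 → ℝ) (hq : q ∈ U) :=
    hasAsymptoticForms_parallelFront (hdiff q hq) ha hc hq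
  refine ⟨parallelFront θ a c 0, parallelFront θ a c Real.pi,
    contDiffOn_parallelFront hU hθ ha hc 0, contDiffOn_parallelFront hU hθ ha hc Real.pi,
    fun q _ => by simp [parallelFront_dotProduct], fun q _ => by simp [parallelFront_dotProduct],
    fun q _ => by simp [parallelFront_dotProduct, neg_div],
    fun q hq k => pd_parallelFront_dotProduct_parallelFront (hdiff q hq) ha hc hq k 0 Real.pi,
    fun q hq X => (hforms q hq).eq_zero_of_fderiv_apply_eq_zero, fun q hq => ?_,
    fun q hq => (hforms q hq).exists_ne_zero_fderiv_apply_eq_zero_iff,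
    fun q hq => (hforms q hq).det_second_div_det_first⟩
  have h := hforms q hq
  exact ⟨h.first₀₀, h.first₀₁, h.first₁₁, h.second₀₀, h.second₀₁, h.second₁₀, h.second₁₁,
    h.third₀₀, h.third₀₁, h.third₁₁⟩
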